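/- arXiv:2202.09758 — 2 statements merged into one kernel-verified Lean document; each statement's English description precedes it below -/
import Mathlib

section
/- For fixed a ∈ (0, 1/2], the function f₃(r) = r²·𝒦ₐ(r) / [(1 + ((2a-1)/(2(1-a)))·r²)·𝒦ₐ(r) − ℰₐ(r)] is strictly decreasing on (0,1), with limit 2(1-a)/(2a²-2a+1) as r → 0⁺. -/
open Real Filter Set Topology

/-- Pochhammer symbol (rising factorial) for real `x`. -/
noncomputable def poch (x : ℝ) (n : ℕ) : ℝ := (ascPochhammer ℝ n).eval x

/-- Generalized complete elliptic integral of the first kind. -/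
noncomputable def Ka (a r : ℝ) : ℝ :=
  (π / 2) * ∑' n : ℕ, (poch a n * poch (1 - a) n / (n.factorial : ℝ) ^ 2) * r ^ (2 * n)

/-- Generalized complete elliptic integral of the second kind. -/
noncomputable def Ea (a r : ℝ) : ℝ :=
  (π / 2) * ∑' n : ℕ, (poch (a - 1) n * poch (1 - a) n / (n.factorial : ℝ) ^ 2) * r ^ (2 * n)

/-- Generalized Grötzsch ring function. -/
noncomputable def muG (a r : ℝ) : ℝ :=
  π / (2 * Real.sin (π * a)) * (Ka a (Real.sqrt (1 - r ^ 2)) / Ka a r)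

/-- Generalized Hersch–Pfluger distortion function. -/
noncomputable def phiHP (a K r : ℝ) : ℝ := Function.invFun (muG a) (muG a r / K)

/-- The function mₐ(r). -/
noncomputable def mA (a r : ℝ) : ℝ :=
  2 / (π * Real.sin (π * a)) * (1 - r ^ 2) * Ka a (Real.sqrt (1 - r ^ 2)) * Ka a r

/-- Digamma function (as the logarithmic derivative of Γ). -/
noncomputable def psiDG (x : ℝ) : ℝ := deriv (fun t => Real.log (Real.Gamma t)) x

/-- Ramanujan constant R(a). -/
noncomputable def RamanujanR (a : ℝ) : ℝ :=
  -2 * Real.eulerMascheroniConstant - psiDG a - psiDG (1 - a)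

/-!
Put `x = r²`. As power series in `x`, `𝒦ₐ` has positive coefficients `Aₙ`, and the denominator of
`f₃`, divided by `x`, has coefficients `DₙAₙ` with `Dₙ = 1 / (2(1 - a)) - a / (n + 1)`. Hence `f₃`
is a quotient of two power series whose coefficients have the strictly decreasing quotients
`1 / Dₙ`. By the Biernacki–Krzyż rule such a quotient is strictly decreasing in `x`, and its limit
at `0` is `1 / D₀`. The rule itself is Chebyshev's sum inequality, with weights the terms of the
denominator at `x`, applied to the coefficient quotients and to `n ↦ (y / x) ^ n` for `y > x`.
-/

section PowerSeries

theorem tsum_mul_tsum_lt_tsum_mul_tsum_of_antivary {ι : Type*} {w f g : ι → ℝ} (hw : 0 ≤ w)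
    (hfg : Antivary f g) {i j : ι} (hi : 0 < w i) (hj : 0 < w j) (hf : f i < f j)
    (hg : g j < g i) (sw : Summable w) (swf : Summable fun k => w k * f k)
    (swg : Summable fun k => w k * g k) (swfg : Summable fun k => w k * f k * g k) :
    (∑' k, w k) * ∑' k, w k * f k * g k < (∑' k, w k * f k) * ∑' k, w k * g k := by
  have prod {u v : ι → ℝ} (hu : Summable u) (hv : Summable v) :
      HasSum (fun p : ι × ι => u p.1 * v p.2) ((∑' k, u k) * ∑' k, v k) :=
    hu.hasSum.mul hv.hasSum (summable_mul_of_summable_norm hu.norm hv.norm)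
  -- Symmetrising the double series of the difference makes all its terms have the same sign.
  have double_sum :
      HasSum (fun p : ι × ι => w p.1 * w p.2 * ((f p.2 - f p.1) * (g p.2 - g p.1)))
        (2 * ((∑' k, w k) * (∑' k, w k * f k * g k) - (∑' k, w k * f k) * ∑' k, w k * g k)) := by
    convert! ((prod sw swfg).add (prod swfg sw)).sub ((prod swf swg).add (prod swg swf)) using 1
    · ext p; ring
    · ring
  have nonpos (p : ι × ι) : w p.1 * w p.2 * ((f p.2 - f p.1) * (g p.2 - g p.1)) ≤ 0 :=
    mul_nonpos_of_nonneg_of_nonpos (mul_nonneg (hw _) (hw _)) (hfg.sub_mul_sub_nonpos _ _)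
  have neg : w i * w j * ((f j - f i) * (g j - g i)) < 0 :=
    mul_neg_of_pos_of_neg (mul_pos hi hj) (mul_neg_of_pos_of_neg (sub_pos.2 hf) (sub_neg.2 hg))
  linarith [hasSum_lt (i := (i, j)) nonpos neg double_sum hasSum_zero]

theorem tsum_mul_pow_pos {b : ℕ → ℝ} (hb : ∀ n, 0 < b n) {x : ℝ} (hx : 0 < x)
    (hs : Summable fun n => b n * x ^ n) : 0 < ∑' n, b n * x ^ n :=
  have pos (n : ℕ) : 0 < b n * x ^ n := mul_pos (hb n) (pow_pos hx n)
  hs.tsum_pos (fun n => (pos n).le) 0 (pos 0)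

theorem strictAntiOn_tsum_div_tsum {b c : ℕ → ℝ} {s : Set ℝ} (hc : ∀ n, 0 < c n)
    (hbc : StrictAnti fun n => b n / c n) (hs : s ⊆ Ioi 0)
    (sb : ∀ x ∈ s, Summable fun n => b n * x ^ n) (sc : ∀ x ∈ s, Summable fun n => c n * x ^ n) :
    StrictAntiOn (fun x => (∑' n, b n * x ^ n) / ∑' n, c n * x ^ n) s := by
  intro x hx y hy hxy
  have hx0 : 0 < x := hs hx
  have weight_mul (n : ℕ) : c n * x ^ n * (b n / c n) = b n * x ^ n := by
    field_simp [(hc n).ne']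
  have mul_ratio_pow (t : ℝ) (n : ℕ) : t * x ^ n * (y / x) ^ n = t * y ^ n := by
    rw [mul_assoc, ← mul_pow, mul_div_cancel₀ y hx0.ne']
  have hg : StrictMono fun n : ℕ => (y / x) ^ n :=
    pow_right_strictMono₀ ((one_lt_div hx0).2 hxy)
  have chebyshev := tsum_mul_tsum_lt_tsum_mul_tsum_of_antivary
    (w := fun n => c n * x ^ n) (f := fun n => b n / c n) (g := fun n => (y / x) ^ n)
    (fun n => (mul_pos (hc n) (pow_pos hx0 n)).le)
    (hbc.antitone.antivary hg.monotone) (i := 1) (j := 0)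
    (mul_pos (hc 1) (pow_pos hx0 1)) (mul_pos (hc 0) (pow_pos hx0 0))
    (hbc zero_lt_one) (hg zero_lt_one)
  simp only [weight_mul, mul_ratio_pow] at chebyshev
  rw [div_lt_div_iff₀ (tsum_mul_pow_pos hc (hs hy) (sc y hy)) (tsum_mul_pow_pos hc hx0 (sc x hx)),
    mul_comm]
  exact chebyshev (sc x hx) (sb x hx) (sc y hy) (sb y hy)

variable {𝕜 : Type*} [NormedField 𝕜] [CompleteSpace 𝕜] {c : ℕ → 𝕜}

theorem summable_mul_pow_of_norm_le {C : ℝ} (hc : ∀ n, ‖c n‖ ≤ C) {x : 𝕜} (hx : ‖x‖ < 1) :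
    Summable fun n => c n * x ^ n := by
  refine .of_norm_bounded ((summable_geometric_of_lt_one (norm_nonneg x) hx).mul_left C) fun n => ?_
  rw [norm_mul, norm_pow]
  gcongr
  exact hc n

theorem tendsto_tsum_mul_pow_nhds_zero {w : 𝕜} (hw : w ≠ 0) (hc : Summable fun n => ‖c n * w ^ n‖) :
    Tendsto (fun x => ∑' n, c n * x ^ n) (𝓝 0) (𝓝 (c 0)) := by
  have value_zero : ∑' n, c n * (0 : 𝕜) ^ n = c 0 := by
    rw [tsum_eq_single 0 fun n hn => by simp [hn], pow_zero, mul_one]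
  rw [← value_zero]
  refine tendsto_tsum_of_dominated_convergence hc
    (fun n => (by fun_prop : Continuous fun x : 𝕜 => c n * x ^ n).tendsto 0) ?_
  filter_upwards [Metric.closedBall_mem_nhds (0 : 𝕜) (norm_pos_iff.2 hw)] with x hx n
  rw [mem_closedBall_zero_iff] at hx
  simp only [norm_mul, norm_pow]
  gcongr

end PowerSeries

section Poch

theorem poch_zero (x : ℝ) : poch x 0 = 1 := by
  simp [poch]

theorem poch_succ (x : ℝ) (n : ℕ) : poch x (n + 1) = poch x n * (x + n) :=
  ascPochhammer_succ_eval n x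

theorem poch_sub_one_succ (x : ℝ) (n : ℕ) : poch (x - 1) (n + 1) = (x - 1) * poch x n := by
  simp [poch, ascPochhammer_succ_left]

theorem poch_pos {x : ℝ} (hx : 0 < x) (n : ℕ) : 0 < poch x n :=
  ascPochhammer_pos n x hx

theorem poch_le_factorial {x : ℝ} (hx₀ : 0 < x) (hx₁ : x ≤ 1) (n : ℕ) :
    poch x n ≤ (n.factorial : ℝ) := by
  induction n with
  | zero => simp [poch_zero]
  | succ n ih =>
    rw [poch_succ, Nat.factorial_succ, Nat.cast_mul, mul_comm, Nat.cast_succ, add_comm (n : ℝ)]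
    have := (poch_pos hx₀ n).le
    gcongr

end Poch

section Coefficients

/-- The coefficient of `r ^ (2 * n)` in `(2 / π) 𝒦ₐ(r)`. -/
noncomputable def kaCoeff (a : ℝ) (n : ℕ) : ℝ :=
  poch a n * poch (1 - a) n / (n.factorial : ℝ) ^ 2

/-- The coefficient of `r ^ (2 * n)` in `(2 / π) ℰₐ(r)`. -/
noncomputable def eaCoeff (a : ℝ) (n : ℕ) : ℝ :=
  poch (a - 1) n * poch (1 - a) n / (n.factorial : ℝ) ^ 2

/-- The coefficient of `r ^ (2 * n + 2)` in the denominator of `f₃`, divided by the coefficient of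
`r ^ (2 * n)` in `𝒦ₐ`. -/
noncomputable def f3CoeffRatio (a : ℝ) (n : ℕ) : ℝ :=
  1 / (2 * (1 - a)) - a / (n + 1)

variable {a : ℝ}

theorem kaCoeff_zero (a : ℝ) : kaCoeff a 0 = 1 := by
  simp [kaCoeff, poch_zero]

theorem eaCoeff_zero (a : ℝ) : eaCoeff a 0 = 1 := by
  simp [eaCoeff, poch_zero]

theorem kaCoeff_pos (ha : a ∈ Ioo (0 : ℝ) 1) (n : ℕ) : 0 < kaCoeff a n := by
  have := poch_pos ha.1 n
  have := poch_pos (sub_pos.2 ha.2) n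
  unfold kaCoeff
  positivity

theorem kaCoeff_le_one (ha : a ∈ Ioo (0 : ℝ) 1) (n : ℕ) : kaCoeff a n ≤ 1 := by
  have h₁ := poch_le_factorial ha.1 ha.2.le n
  have h₂ := poch_le_factorial (sub_pos.2 ha.2) (sub_le_self 1 ha.1.le) n
  rw [kaCoeff, div_le_one (by positivity), sq]
  exact mul_le_mul h₁ h₂ (poch_pos (sub_pos.2 ha.2) n).le (by positivity)

theorem kaCoeff_succ_sub_eaCoeff_succ (a : ℝ) (n : ℕ) :
    kaCoeff a (n + 1) - eaCoeff a (n + 1) = (1 - a / (n + 1)) * kaCoeff a n := by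
  rw [kaCoeff, eaCoeff, kaCoeff, poch_sub_one_succ, poch_succ a, poch_succ (1 - a),
    Nat.factorial_succ]
  push_cast
  field_simp
  ring

theorem f3CoeffRatio_eq_add (ha : a ≠ 1) (n : ℕ) :
    f3CoeffRatio a n = (1 - a / (n + 1)) + (2 * a - 1) / (2 * (1 - a)) := by
  have := sub_ne_zero.2 ha.symm
  rw [f3CoeffRatio]
  field_simp
  ring

theorem f3CoeffRatio_zero (ha : a ≠ 1) :
    f3CoeffRatio a 0 = (2 * a ^ 2 - 2 * a + 1) / (2 * (1 - a)) := by
  have := sub_ne_zero.2 ha.symm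
  rw [f3CoeffRatio]
  push_cast
  field_simp
  ring

theorem f3CoeffRatio_strictMono (ha : 0 < a) : StrictMono (f3CoeffRatio a) := by
  intro m n hmn
  unfold f3CoeffRatio
  gcongr

theorem f3CoeffRatio_pos (ha : a ∈ Ioo (0 : ℝ) 1) (n : ℕ) : 0 < f3CoeffRatio a n := by
  refine lt_of_lt_of_le ?_ ((f3CoeffRatio_strictMono ha.1).monotone n.zero_le)
  rw [f3CoeffRatio_zero ha.2.ne]
  exact div_pos (by nlinarith [sq_nonneg (2 * a - 1)]) (by linarith [ha.2])

theorem f3CoeffRatio_le (ha : 0 ≤ a) (n : ℕ) : f3CoeffRatio a n ≤ 1 / (2 * (1 - a)) :=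
  sub_le_self _ (by positivity)

end Coefficients

section Series

variable {a : ℝ}

theorem summable_mul_kaCoeff_mul_pow (ha : a ∈ Ioo (0 : ℝ) 1) {d : ℕ → ℝ} {C : ℝ}
    (hd : ∀ n, |d n| ≤ C) {x : ℝ} (hx : |x| < 1) :
    Summable fun n => d n * kaCoeff a n * x ^ n := by
  refine summable_mul_pow_of_norm_le (C := C) (fun n => ?_) hx
  rw [norm_mul, norm_of_nonneg (kaCoeff_pos ha n).le]
  exact (mul_le_of_le_one_right (norm_nonneg _) (kaCoeff_le_one ha n)).trans (hd n)

theorem summable_kaCoeff_mul_pow (ha : a ∈ Ioo (0 : ℝ) 1) {x : ℝ} (hx : |x| < 1) :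
    Summable fun n => kaCoeff a n * x ^ n := by
  simpa using summable_mul_kaCoeff_mul_pow ha (d := 1) (C := 1) (by simp) hx

theorem summable_f3CoeffRatio_mul_kaCoeff_mul_pow (ha : a ∈ Ioo (0 : ℝ) 1) {x : ℝ}
    (hx : |x| < 1) : Summable fun n => f3CoeffRatio a n * kaCoeff a n * x ^ n :=
  summable_mul_kaCoeff_mul_pow ha
    (fun n => (abs_of_pos (f3CoeffRatio_pos ha n)).trans_le (f3CoeffRatio_le ha.1.le n)) hx

theorem Ka_eq_tsum (a r : ℝ) : Ka a r = π / 2 * ∑' n, kaCoeff a n * (r ^ 2) ^ n := by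
  simp only [Ka, kaCoeff, pow_mul]

theorem Ea_eq_tsum (a r : ℝ) : Ea a r = π / 2 * ∑' n, eaCoeff a n * (r ^ 2) ^ n := by
  simp only [Ea, eaCoeff, pow_mul]

theorem summable_one_sub_mul_kaCoeff_mul_pow (ha : a ∈ Ioo (0 : ℝ) 1) {x : ℝ} (hx : |x| < 1) :
    Summable fun n : ℕ => (1 - a / (n + 1)) * kaCoeff a n * x ^ n := by
  refine summable_mul_kaCoeff_mul_pow ha (C := 1) (fun n => ?_) hx
  have h₀ : 0 ≤ a / (n + 1) := div_nonneg ha.1.le (by positivity)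
  have h₁ : a / (n + 1) ≤ 1 :=
    div_le_one_of_le₀ (by linarith [ha.2, n.cast_nonneg (α := ℝ)]) (by positivity)
  exact abs_le.2 ⟨by linarith, by linarith⟩

theorem Ka_sub_Ea (ha : a ∈ Ioo (0 : ℝ) 1) {r : ℝ} (hr : |r| < 1) :
    Ka a r - Ea a r =
      π / 2 * (r ^ 2 * ∑' n : ℕ, (1 - a / (n + 1)) * kaCoeff a n * (r ^ 2) ^ n) := by
  have hx : |r ^ 2| < 1 := by rwa [abs_sq, sq_lt_one_iff_abs_lt_one]
  have hK := (summable_kaCoeff_mul_pow ha hx).hasSum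
  have hdiff : HasSum (fun n => (kaCoeff a n - eaCoeff a n) * (r ^ 2) ^ n)
      (r ^ 2 * ∑' n : ℕ, (1 - a / (n + 1)) * kaCoeff a n * (r ^ 2) ^ n) := by
    rw [← hasSum_nat_add_iff' 1, Finset.sum_range_one, kaCoeff_zero, eaCoeff_zero, sub_self,
      zero_mul, sub_zero]
    refine ((summable_one_sub_mul_kaCoeff_mul_pow ha hx).hasSum.mul_left (r ^ 2)).congr_fun
      fun n => ?_
    rw [kaCoeff_succ_sub_eaCoeff_succ]
    ring
  have hE : HasSum (fun n => eaCoeff a n * (r ^ 2) ^ n)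
      ((∑' n, kaCoeff a n * (r ^ 2) ^ n) -
        r ^ 2 * ∑' n : ℕ, (1 - a / (n + 1)) * kaCoeff a n * (r ^ 2) ^ n) :=
    (hK.sub hdiff).congr_fun fun n => by ring
  rw [Ka_eq_tsum, Ea_eq_tsum, hE.tsum_eq]
  ring

theorem f3_denom_eq_tsum (ha : a ∈ Ioo (0 : ℝ) 1) {r : ℝ} (hr : |r| < 1) :
    (1 + (2 * a - 1) / (2 * (1 - a)) * r ^ 2) * Ka a r - Ea a r =
      π / 2 * (r ^ 2 * ∑' n, f3CoeffRatio a n * kaCoeff a n * (r ^ 2) ^ n) := by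
  have hx : |r ^ 2| < 1 := by rwa [abs_sq, sq_lt_one_iff_abs_lt_one]
  have split : ∑' n, f3CoeffRatio a n * kaCoeff a n * (r ^ 2) ^ n =
      (∑' n : ℕ, (1 - a / (n + 1)) * kaCoeff a n * (r ^ 2) ^ n) +
        (2 * a - 1) / (2 * (1 - a)) * ∑' n, kaCoeff a n * (r ^ 2) ^ n := by
    rw [← tsum_mul_left, ← (summable_one_sub_mul_kaCoeff_mul_pow ha hx).tsum_add
      ((summable_kaCoeff_mul_pow ha hx).mul_left _)]
    refine tsum_congr fun n => ?_
    rw [f3CoeffRatio_eq_add ha.2.ne]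
    ring
  calc (1 + (2 * a - 1) / (2 * (1 - a)) * r ^ 2) * Ka a r - Ea a r
    _ = (Ka a r - Ea a r) + (2 * a - 1) / (2 * (1 - a)) * r ^ 2 * Ka a r := by ring
    _ = _ := by rw [Ka_sub_Ea ha hr, Ka_eq_tsum, split]; ring

theorem f3_eq_tsum_div_tsum (ha : a ∈ Ioo (0 : ℝ) 1) {r : ℝ} (hr₀ : r ≠ 0) (hr : |r| < 1) :
    r ^ 2 * Ka a r / ((1 + (2 * a - 1) / (2 * (1 - a)) * r ^ 2) * Ka a r - Ea a r) =
      (∑' n, kaCoeff a n * (r ^ 2) ^ n) /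
        ∑' n, f3CoeffRatio a n * kaCoeff a n * (r ^ 2) ^ n := by
  rw [f3_denom_eq_tsum ha hr, Ka_eq_tsum, mul_left_comm, mul_div_mul_left _ _ (by positivity),
    mul_div_mul_left _ _ (by positivity)]

theorem strictAntiOn_kaCoeff_tsum_div_tsum (ha : a ∈ Ioo (0 : ℝ) 1) :
    StrictAntiOn (fun x => (∑' n, kaCoeff a n * x ^ n) /
      ∑' n, f3CoeffRatio a n * kaCoeff a n * x ^ n) (Ioo 0 1) := by
  have coeff_ratio (n : ℕ) : kaCoeff a n / (f3CoeffRatio a n * kaCoeff a n) =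
      (f3CoeffRatio a n)⁻¹ :=
    div_mul_cancel_right₀ (kaCoeff_pos ha n).ne' _
  have abs_lt_one {x : ℝ} (hx : x ∈ Ioo (0 : ℝ) 1) : |x| < 1 := (abs_of_pos hx.1).trans_lt hx.2
  refine strictAntiOn_tsum_div_tsum (fun n => mul_pos (f3CoeffRatio_pos ha n) (kaCoeff_pos ha n))
    ?_ Ioo_subset_Ioi_self (fun x hx => summable_kaCoeff_mul_pow ha (abs_lt_one hx))
    fun x hx => summable_f3CoeffRatio_mul_kaCoeff_mul_pow ha (abs_lt_one hx)
  intro m n hmn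
  simpa only [coeff_ratio] using
    inv_strictAnti₀ (f3CoeffRatio_pos ha m) (f3CoeffRatio_strictMono ha.1 hmn)

theorem tendsto_kaCoeff_tsum_div_tsum_nhds_zero (ha : a ∈ Ioo (0 : ℝ) 1) :
    Tendsto (fun x => (∑' n, kaCoeff a n * x ^ n) /
      ∑' n, f3CoeffRatio a n * kaCoeff a n * x ^ n)
      (𝓝 0) (𝓝 (2 * (1 - a) / (2 * a ^ 2 - 2 * a + 1))) := by
  have half_ne : (1 / 2 : ℝ) ≠ 0 := by norm_num
  have half_lt : |(1 / 2 : ℝ)| < 1 := by norm_num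
  have value : kaCoeff a 0 / (f3CoeffRatio a 0 * kaCoeff a 0) =
      2 * (1 - a) / (2 * a ^ 2 - 2 * a + 1) := by
    rw [kaCoeff_zero, mul_one, f3CoeffRatio_zero ha.2.ne, one_div_div]
  rw [← value]
  exact (tendsto_tsum_mul_pow_nhds_zero half_ne (summable_kaCoeff_mul_pow ha half_lt).norm).div
    (tendsto_tsum_mul_pow_nhds_zero half_ne
      (summable_f3CoeffRatio_mul_kaCoeff_mul_pow ha half_lt).norm)
    (mul_pos (f3CoeffRatio_pos ha 0) (kaCoeff_pos ha 0)).ne'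

end Series

theorem f3_strictAnti_and_limit_general {a : ℝ} (ha : a ∈ Ioo (0 : ℝ) 1) :
    StrictAntiOn (fun r : ℝ =>
        r ^ 2 * Ka a r / ((1 + (2 * a - 1) / (2 * (1 - a)) * r ^ 2) * Ka a r - Ea a r))
      (Ioo 0 1) ∧
    Tendsto (fun r : ℝ =>
        r ^ 2 * Ka a r / ((1 + (2 * a - 1) / (2 * (1 - a)) * r ^ 2) * Ka a r - Ea a r))
      (𝓝[>] 0) (𝓝 (2 * (1 - a) / (2 * a ^ 2 - 2 * a + 1))) := by
  have series {r : ℝ} (hr : r ∈ Ioo (0 : ℝ) 1) :=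
    f3_eq_tsum_div_tsum ha hr.1.ne' ((abs_of_pos hr.1).trans_lt hr.2)
  constructor
  · have sq_mapsTo : MapsTo (fun r : ℝ => r ^ 2) (Ioo 0 1) (Ioo 0 1) := fun r hr =>
      ⟨pow_pos hr.1 2, pow_lt_one₀ hr.1.le hr.2 two_ne_zero⟩
    have sq_strictMonoOn : StrictMonoOn (fun r : ℝ => r ^ 2) (Ioo 0 1) :=
      (pow_left_strictMonoOn₀ two_ne_zero).mono fun r hr => hr.1.le
    exact ((strictAntiOn_kaCoeff_tsum_div_tsum ha).comp_strictMonoOn sq_strictMonoOn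
      sq_mapsTo).congr fun r hr => (series hr).symm
  · have sq_tendsto : Tendsto (fun r : ℝ => r ^ 2) (𝓝[>] 0) (𝓝 0) :=
      ((continuous_pow 2).tendsto' 0 0 (zero_pow two_ne_zero)).mono_left nhdsWithin_le_nhds
    refine ((tendsto_kaCoeff_tsum_div_tsum_nhds_zero ha).comp sq_tendsto).congr' ?_
    filter_upwards [Ioo_mem_nhdsGT (zero_lt_one' ℝ)] with r hr
    exact (series hr).symm

theorem f3_strictAnti_and_limit (a : ℝ) (ha : a ∈ Set.Ioc (0:ℝ) (1/2)) :
    StrictAntiOn (fun r : ℝ =>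
        r^2 * Ka a r / ((1 + ((2*a - 1)/(2*(1 - a))) * r^2) * Ka a r - Ea a r))
      (Set.Ioo 0 1) ∧
    Filter.Tendsto (fun r : ℝ =>
        r^2 * Ka a r / ((1 + ((2*a - 1)/(2*(1 - a))) * r^2) * Ka a r - Ea a r))
      (nhdsWithin 0 (Set.Ioi 0)) (nhds (2*(1 - a)/(2*a^2 - 2*a + 1))) :=
  f3_strictAnti_and_limit_general ⟨ha.1, ha.2.trans_lt one_half_lt_one⟩
end

section
/- For fixed a ∈ (0, 1/2], the function r ↦ (1-r²)·𝒦ₐ(r)² is strictly decreasing on (0,1), and consequently for a fixed t ∈ (0,1) the function f₆(r) = μₐ(r) + μₐ(t) − μₐ(rt) is strictly decreasing in r on (0,1); since f₆(r) → 0 as r → 1⁻, one obtains μₐ(r) + μₐ(t) > μₐ(rt) for all r, t ∈ (0,1). -/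
open Real Filter Set Topology

/-!
Write `F = ₂F₁(a, 1 - a; 1; ·)` and `G = ₂F₁(a, 1 - a; 2; ·)`. Comparing coefficients gives
`(1 - x) F' = a (1 - a) G` and `(x G)' = F`, and `G ≤ F` on `[0, 1)`. Since `2 a (1 - a) < 1`, the
derivative `F (2 a (1 - a) G - F)` of `(1 - x) F²` is negative; with `x = r²` this is the
monotonicity of `(1 - r²) 𝒦ₐ(r)²`.

By the same two identities the Legendre expression `x G(x) F(1 - x) + (1 - x) G(1 - x) F(x)` is
constant, so the quotient rule gives `r μₐ'(r) = -C / ((1 - r²) 𝒦ₐ(r)²)` with a constant `C > 0`.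
Hence `r μₐ'(r)` is strictly decreasing, and `μₐ(r) + μₐ(t) - μₐ(r t)` has the negative derivative
`(r μₐ'(r) - r t μₐ'(r t)) / r`. Finally `F(x) ≥ -a (1 - a) log (1 - x)` forces `μₐ(r) → 0` as
`r → 1`, and a strictly decreasing function stays above its limit.
-/

section Coefficients

variable {𝕂 : Type*} [Field 𝕂] {a b c : 𝕂}

lemma succ_mul_ordinaryHypergeometricCoefficient_succ [CharZero 𝕂] (a b c : 𝕂) (n : ℕ) :
    (n + 1) * ordinaryHypergeometricCoefficient a b c (n + 1) =
      ordinaryHypergeometricCoefficient a b c n * ((a + n) * (b + n) / (c + n)) := by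
  have hn : (n : 𝕂) + 1 ≠ 0 := n.cast_add_one_ne_zero
  have hfac : (n.factorial : 𝕂) ≠ 0 := Nat.cast_ne_zero.2 n.factorial_ne_zero
  simp only [ordinaryHypergeometricCoefficient, ascPochhammer_succ_eval, Nat.factorial_succ,
    mul_inv, Nat.cast_mul, Nat.cast_add_one]
  field_simp

lemma mul_ordinaryHypergeometricCoefficient_add_one (hc : ∀ k : ℕ, (k : 𝕂) ≠ -c) (a b : 𝕂)
    (n : ℕ) :
    (c + n) * ordinaryHypergeometricCoefficient a b (c + 1) n =
      c * ordinaryHypergeometricCoefficient a b c n := by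
  have hpoch : c * (ascPochhammer 𝕂 n).eval (c + 1) = (ascPochhammer 𝕂 n).eval c * (c + n) := by
    rw [← ascPochhammer_succ_eval, ascPochhammer_succ_left]
    simp
  have hcn : c + n ≠ 0 := fun h ↦ hc n (eq_neg_of_add_eq_zero_right h)
  have hne : (ascPochhammer 𝕂 n).eval c ≠ 0 := by
    rw [Ne, ascPochhammer_eval_eq_zero_iff]
    exact fun ⟨k, _, hk⟩ ↦ hc k hk
  have hne' : (ascPochhammer 𝕂 n).eval (c + 1) ≠ 0 :=
    right_ne_zero_of_mul (hpoch ▸ mul_ne_zero hne hcn)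
  simp only [ordinaryHypergeometricCoefficient]
  field_simp
  linear_combination (-((n.factorial : 𝕂)⁻¹ * (ascPochhammer 𝕂 n).eval a *
    (ascPochhammer 𝕂 n).eval b)) * hpoch

lemma succ_mul_ordinaryHypergeometricCoefficient_succ_sub [CharZero 𝕂]
    (hc : ∀ k : ℕ, (k : 𝕂) ≠ -c) (habc : a + b = c) (n : ℕ) :
    (n + 1) * ordinaryHypergeometricCoefficient a b c (n + 1) -
        n * ordinaryHypergeometricCoefficient a b c n =
      a * b / c * ordinaryHypergeometricCoefficient a b (c + 1) n := by
  have hc0 : c ≠ 0 := fun h ↦ hc 0 (by simp [h])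
  have hcn : c + n ≠ 0 := fun h ↦ hc n (eq_neg_of_add_eq_zero_right h)
  have hshift := mul_ordinaryHypergeometricCoefficient_add_one hc a b n
  rw [succ_mul_ordinaryHypergeometricCoefficient_succ]
  generalize ordinaryHypergeometricCoefficient a b c n = u at *
  generalize ordinaryHypergeometricCoefficient a b (c + 1) n = v at *
  field_simp
  subst habc
  linear_combination (-a * b) * hshift

end Coefficients

section Hypergeometric

variable {𝕂 : Type*} [RCLike 𝕂] {a b c x : 𝕂}

lemma one_le_radius_ordinaryHypergeometricSeries (a b c : 𝕂) :
    1 ≤ (ordinaryHypergeometricSeries 𝕂 a b c).radius := by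
  by_cases habc : ∀ k : ℕ, (k : 𝕂) ≠ -a ∧ (k : 𝕂) ≠ -b ∧ (k : 𝕂) ≠ -c
  · exact (ordinaryHypergeometricSeries_radius_eq_one 𝕂 a b c habc).ge
  · suffices (ordinaryHypergeometricSeries 𝕂 a b c).radius = ⊤ from this ▸ le_top
    push Not at habc
    obtain ⟨k, hk⟩ := habc
    by_cases ha : (k : 𝕂) = -a
    · rw [← neg_eq_iff_eq_neg.2 ha]
      exact ordinaryHypergeometric_radius_top_of_neg_nat₁ 𝕂 b c
    by_cases hb : (k : 𝕂) = -b
    · rw [← neg_eq_iff_eq_neg.2 hb]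
      exact ordinaryHypergeometric_radius_top_of_neg_nat₂ 𝕂 a c
    rw [← neg_eq_iff_eq_neg.2 (hk ha hb)]
    exact ordinaryHypergeometric_radius_top_of_neg_nat₃ 𝕂 a b

lemma hasFPowerSeriesOnBall_ordinaryHypergeometric (a b c : 𝕂) :
    HasFPowerSeriesOnBall (₂F₁ a b c) (ordinaryHypergeometricSeries 𝕂 a b c) 0 1 :=
  have hr := one_le_radius_ordinaryHypergeometricSeries a b c
  ((ordinaryHypergeometricSeries 𝕂 a b c).hasFPowerSeriesOnBall (one_pos.trans_le hr)).mono
    one_pos hr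

lemma differentiableAt_ordinaryHypergeometric (a b c : 𝕂) (hx : ‖x‖ < 1) :
    DifferentiableAt 𝕂 (₂F₁ a b c) x :=
  ((hasFPowerSeriesOnBall_ordinaryHypergeometric a b c).analyticAt_of_mem
    (by simpa [← ofReal_norm] using hx)).differentiableAt

lemma hasSum_ordinaryHypergeometric (a b c : 𝕂) (hx : ‖x‖ < 1) :
    HasSum (fun n : ℕ ↦ ordinaryHypergeometricCoefficient a b c n * x ^ n) (₂F₁ a b c x) := by
  have h := (hasFPowerSeriesOnBall_ordinaryHypergeometric a b c).hasSum (y := x)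
    (by simpa [← ofReal_norm] using hx)
  simpa only [zero_add, ordinaryHypergeometricSeries_apply_eq, smul_eq_mul] using h

lemma hasSum_deriv_ordinaryHypergeometric (a b c : 𝕂) (hx : ‖x‖ < 1) :
    HasSum (fun n : ℕ ↦ (n + 1) * ordinaryHypergeometricCoefficient a b c (n + 1) * x ^ n)
      (deriv (₂F₁ a b c) x) := by
  have h := (hasFPowerSeriesOnBall_ordinaryHypergeometric a b c).fderiv.hasSum (y := x)
    (by simpa [← ofReal_norm] using hx)
  have h := (ContinuousLinearMap.apply 𝕂 𝕂 (1 : 𝕂)).hasSum h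
  simpa [ordinaryHypergeometricSeries, FormalMultilinearSeries.apply_eq_pow_smul_coeff,
    mul_comm] using h

lemma hasSum_mul_deriv_ordinaryHypergeometric (a b c : 𝕂) (hx : ‖x‖ < 1) :
    HasSum (fun n : ℕ ↦ n * ordinaryHypergeometricCoefficient a b c n * x ^ n)
      (x * deriv (₂F₁ a b c) x) := by
  have h := (hasSum_deriv_ordinaryHypergeometric a b c hx).mul_left x
  rw [← hasSum_nat_add_iff' 1]
  simpa [pow_succ', mul_assoc, mul_left_comm] using h

lemma mul_deriv_ordinaryHypergeometric_add (hc : ∀ k : ℕ, (k : 𝕂) ≠ -c) (a b : 𝕂) (hx : ‖x‖ < 1) :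
    x * deriv (₂F₁ a b (c + 1)) x + c * ₂F₁ a b (c + 1) x = c * ₂F₁ a b c x := by
  have h₁ := (hasSum_mul_deriv_ordinaryHypergeometric a b (c + 1) hx).add
    ((hasSum_ordinaryHypergeometric a b (c + 1) hx).mul_left c)
  have h₂ := (hasSum_ordinaryHypergeometric a b c hx).mul_left c
  refine h₁.unique (h₂.congr_fun fun n ↦ ?_)
  linear_combination x ^ n * mul_ordinaryHypergeometricCoefficient_add_one hc a b n

lemma one_sub_mul_deriv_ordinaryHypergeometric (hc : ∀ k : ℕ, (k : 𝕂) ≠ -c) (habc : a + b = c)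
    (hx : ‖x‖ < 1) :
    (1 - x) * deriv (₂F₁ a b c) x = a * b / c * ₂F₁ a b (c + 1) x := by
  have h₁ := (hasSum_deriv_ordinaryHypergeometric a b c hx).sub
    (hasSum_mul_deriv_ordinaryHypergeometric a b c hx)
  have h₂ := (hasSum_ordinaryHypergeometric a b (c + 1) hx).mul_left (a * b / c)
  rw [sub_mul, one_mul]
  refine h₁.unique (h₂.congr_fun fun n ↦ ?_)
  linear_combination x ^ n *
    succ_mul_ordinaryHypergeometricCoefficient_succ_sub hc habc n

lemma hasDerivAt_ordinaryHypergeometric_of_add_eq (hc : ∀ k : ℕ, (k : 𝕂) ≠ -c)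
    (habc : a + b = c) (hx : ‖x‖ < 1) :
    HasDerivAt (₂F₁ a b c) (a * b / c * ₂F₁ a b (c + 1) x / (1 - x)) x := by
  have hx1 : 1 - x ≠ 0 := fun h ↦ by simp [← sub_eq_zero.1 h] at hx
  rw [← one_sub_mul_deriv_ordinaryHypergeometric hc habc hx, mul_div_cancel_left₀ _ hx1]
  exact (differentiableAt_ordinaryHypergeometric a b c hx).hasDerivAt

lemma hasDerivAt_mul_ordinaryHypergeometric_two (a b : 𝕂) (hx : ‖x‖ < 1) :
    HasDerivAt (fun y ↦ y * ₂F₁ a b 2 y) (₂F₁ a b 1 x) x := by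
  have hone : ∀ k : ℕ, (k : 𝕂) ≠ -1 := fun k h ↦ k.cast_add_one_ne_zero (by rw [h, neg_add_cancel])
  have h := mul_deriv_ordinaryHypergeometric_add hone a b hx
  rw [one_add_one_eq_two] at h
  refine ((hasDerivAt_id' x).mul
    (differentiableAt_ordinaryHypergeometric a b 2 hx).hasDerivAt).congr_deriv ?_
  linear_combination h

end Hypergeometric

lemma mul_mem_Ioo_zero_one {R : Type*} [Semiring R] [PartialOrder R] [IsStrictOrderedRing R]
    {x y : R} (hx : x ∈ Ioo 0 1) (hy : y ∈ Ioo 0 1) : x * y ∈ Ioo 0 1 :=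
  ⟨mul_pos hx.1 hy.1, mul_lt_one_of_nonneg_of_lt_one_left hx.1.le hx.2 hy.2.le⟩

lemma sq_mem_Ioo_zero_one {R : Type*} [Semiring R] [PartialOrder R] [IsStrictOrderedRing R]
    {x : R} (hx : x ∈ Ioo 0 1) : x ^ 2 ∈ Ioo 0 1 :=
  sq x ▸ mul_mem_Ioo_zero_one hx hx

lemma tendsto_sub_nhdsLT {G : Type*} [AddGroup G] [Preorder G] [AddRightStrictMono G]
    [TopologicalSpace G] [ContinuousSub G] (a : G) :
    Tendsto (fun x ↦ a - x) (𝓝[<] a) (𝓝[>] 0) := by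
  refine tendsto_nhdsWithin_iff.2 ⟨?_, ?_⟩
  · exact ((continuous_const.sub continuous_id).tendsto' a 0 (sub_self a)).mono_left
      nhdsWithin_le_nhds
  · filter_upwards [self_mem_nhdsWithin] with x hx using sub_pos.2 (mem_Iio.1 hx)

section Positive

variable {a b c x : ℝ}

lemma natCast_ne_neg_of_pos (hc : 0 < c) (k : ℕ) : (k : ℝ) ≠ -c :=
  ((neg_neg_of_pos hc).trans_le k.cast_nonneg).ne'

lemma norm_lt_one_of_mem_Ico (hx : x ∈ Ico 0 1) : ‖x‖ < 1 :=
  (norm_of_nonneg hx.1).trans_lt hx.2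

lemma ordinaryHypergeometricCoefficient_pos (ha : 0 < a) (hb : 0 < b) (hc : 0 < c) (n : ℕ) :
    0 < ordinaryHypergeometricCoefficient a b c n := by
  have := ascPochhammer_pos n a ha
  have := ascPochhammer_pos n b hb
  have := ascPochhammer_pos n c hc
  positivity

lemma ordinaryHypergeometricCoefficient_add_one_le (ha : 0 < a) (hb : 0 < b) (hc : 0 < c)
    (n : ℕ) :
    ordinaryHypergeometricCoefficient a b (c + 1) n ≤
      ordinaryHypergeometricCoefficient a b c n := by
  have hpos := ordinaryHypergeometricCoefficient_pos ha hb (add_pos hc one_pos) n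
  refine le_of_mul_le_mul_left ?_ hc
  rw [← mul_ordinaryHypergeometricCoefficient_add_one (natCast_ne_neg_of_pos hc)]
  gcongr
  exact le_add_of_nonneg_right n.cast_nonneg

lemma ordinaryHypergeometric_pos (ha : 0 < a) (hb : 0 < b) (hc : 0 < c) (hx : x ∈ Ico 0 1) :
    0 < ₂F₁ a b c x := by
  have hcoeff := ordinaryHypergeometricCoefficient_pos ha hb hc
  have hsum := hasSum_ordinaryHypergeometric a b c (norm_lt_one_of_mem_Ico hx)
  rw [← hsum.tsum_eq]
  exact hsum.summable.tsum_pos (fun n ↦ mul_nonneg (hcoeff n).le (pow_nonneg hx.1 n)) 0 (by simp)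

lemma ordinaryHypergeometric_add_one_le (ha : 0 < a) (hb : 0 < b) (hc : 0 < c) (hx : x ∈ Ico 0 1) :
    ₂F₁ a b (c + 1) x ≤ ₂F₁ a b c x := by
  have hx' : ‖x‖ < 1 := norm_lt_one_of_mem_Ico hx
  refine hasSum_le (fun n ↦ ?_) (hasSum_ordinaryHypergeometric a b (c + 1) hx')
    (hasSum_ordinaryHypergeometric a b c hx')
  exact mul_le_mul_of_nonneg_right (ordinaryHypergeometricCoefficient_add_one_le ha hb hc n)
    (pow_nonneg hx.1 n)

lemma strictAntiOn_one_sub_mul_ordinaryHypergeometric_sq (ha : 0 < a) (hb : 0 < b)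
    (habc : a + b = c) (hlt : 2 * (a * b) < c) :
    StrictAntiOn (fun x : ℝ ↦ (1 - x) * ₂F₁ a b c x ^ 2) (Ico 0 1) := by
  have hc : 0 < c := habc ▸ add_pos ha hb
  have hderiv : ∀ x ∈ Ico (0 : ℝ) 1, HasDerivAt (fun x ↦ (1 - x) * ₂F₁ a b c x ^ 2)
      (₂F₁ a b c x * (2 * (a * b / c) * ₂F₁ a b (c + 1) x - ₂F₁ a b c x)) x := fun x hx ↦ by
    have hF := hasDerivAt_ordinaryHypergeometric_of_add_eq (natCast_ne_neg_of_pos hc) habc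
      (norm_lt_one_of_mem_Ico hx)
    have hx1 : 1 - x ≠ 0 := (sub_pos.2 hx.2).ne'
    refine (((hasDerivAt_id' x).const_sub 1).mul (hF.pow 2)).congr_deriv ?_
    simp only [Pi.pow_apply]
    field_simp
    ring
  refine strictAntiOn_of_deriv_neg (convex_Ico 0 1)
    (fun x hx ↦ (hderiv x hx).continuousAt.continuousWithinAt) fun x hx ↦ ?_
  replace hx := interior_subset hx
  rw [(hderiv x hx).deriv]
  have hF := ordinaryHypergeometric_pos ha hb hc hx
  have hG := ordinaryHypergeometric_pos ha hb (add_pos hc one_pos) hx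
  refine mul_neg_of_pos_of_neg hF (sub_neg.2 ?_)
  calc 2 * (a * b / c) * ₂F₁ a b (c + 1) x < 1 * ₂F₁ a b (c + 1) x := by
        gcongr
        rwa [← mul_div_assoc, div_lt_one hc]
    _ ≤ ₂F₁ a b c x := by simpa using ordinaryHypergeometric_add_one_le ha hb hc hx

lemma monotone_mul_ordinaryHypergeometricCoefficient (ha : 0 < a) (hb : 0 < b) (habc : a + b = c) :
    Monotone fun n : ℕ ↦ n * ordinaryHypergeometricCoefficient a b c n := by
  have hc : 0 < c := habc ▸ add_pos ha hb
  refine monotone_nat_of_le_succ fun n ↦ sub_nonneg.1 ?_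
  have hpos := ordinaryHypergeometricCoefficient_pos ha hb (add_pos hc one_pos) n
  rw [Nat.cast_add_one,
    succ_mul_ordinaryHypergeometricCoefficient_succ_sub (natCast_ne_neg_of_pos hc) habc]
  positivity

lemma mul_neg_log_le_ordinaryHypergeometric (ha : 0 < a) (hb : 0 < b) (habc : a + b = c)
    (hx : x ∈ Ico 0 1) :
    a * b / c * -log (1 - x) ≤ ₂F₁ a b c x := by
  have hx' : ‖x‖ < 1 := norm_lt_one_of_mem_Ico hx
  have hcoeff (n : ℕ) : a * b / c ≤ (n + 1) * ordinaryHypergeometricCoefficient a b c (n + 1) := by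
    simpa [ordinaryHypergeometricCoefficient, div_eq_mul_inv] using
      monotone_mul_ordinaryHypergeometricCoefficient ha hb habc (Nat.le_add_left 1 n)
  have hF := (hasSum_nat_add_iff' 1).2 (hasSum_ordinaryHypergeometric a b c hx')
  calc a * b / c * -log (1 - x) ≤ ₂F₁ a b c x - 1 := by
        refine hasSum_le (fun n ↦ ?_) ((hasSum_pow_div_log_of_abs_lt_one hx').mul_left _)
          (by simpa [ordinaryHypergeometricCoefficient] using hF)
        rw [← mul_div_assoc, div_le_iff₀ (by positivity), mul_right_comm, mul_comm _ (n + 1 : ℝ)]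
        exact mul_le_mul_of_nonneg_right (hcoeff n) (pow_nonneg hx.1 (n + 1))
    _ ≤ ₂F₁ a b c x := sub_le_self _ zero_le_one

lemma tendsto_ordinaryHypergeometric_nhdsLT_one (ha : 0 < a) (hb : 0 < b) (habc : a + b = c) :
    Tendsto (₂F₁ a b c) (𝓝[<] (1 : ℝ)) atTop := by
  have hc : 0 < c := habc ▸ add_pos ha hb
  have hlog : Tendsto (fun x : ℝ ↦ a * b / c * -log (1 - x)) (𝓝[<] 1) atTop :=
    (tendsto_neg_atBot_atTop.comp
      (tendsto_log_nhdsGT_zero.comp (tendsto_sub_nhdsLT 1))).const_mul_atTop (by positivity)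
  refine tendsto_atTop_mono' _ ?_ hlog
  filter_upwards [Ioo_mem_nhdsLT one_pos] with x hx
  exact mul_neg_log_le_ordinaryHypergeometric ha hb habc (Ioo_subset_Ico_self hx)

end Positive

section Legendre

variable {a b x : ℝ}

lemma hasDerivAt_ordinaryHypergeometric_of_add_eq_one (hab : a + b = 1) (hx : x ∈ Ioo 0 1) :
    HasDerivAt (₂F₁ a b 1) (a * b * ₂F₁ a b 2 x / (1 - x)) x := by
  simpa [one_add_one_eq_two] using hasDerivAt_ordinaryHypergeometric_of_add_eq
    (natCast_ne_neg_of_pos one_pos) hab (norm_lt_one_of_mem_Ico (Ioo_subset_Ico_self hx))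

lemma hasDerivAt_ordinaryHypergeometric_one_sub (hab : a + b = 1) (hx : x ∈ Ioo 0 1) :
    HasDerivAt (fun y ↦ ₂F₁ a b 1 (1 - y)) (-(a * b * ₂F₁ a b 2 (1 - x) / x)) x := by
  simpa using (hasDerivAt_ordinaryHypergeometric_of_add_eq_one hab
    (Ioo.one_sub_mem hx)).comp_const_sub 1 x

lemma ordinaryHypergeometric_legendre_relation (hab : a + b = 1) (hx : x ∈ Ioo 0 1) :
    x * ₂F₁ a b 2 x * ₂F₁ a b 1 (1 - x) + (1 - x) * ₂F₁ a b 2 (1 - x) * ₂F₁ a b 1 x =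
      ₂F₁ a b 2 (1 / 2 : ℝ) * ₂F₁ a b 1 (1 / 2 : ℝ) := by
  have hderiv : ∀ y ∈ Ioo (0 : ℝ) 1, HasDerivAt (fun y ↦ y * ₂F₁ a b 2 y * ₂F₁ a b 1 (1 - y) +
      (1 - y) * ₂F₁ a b 2 (1 - y) * ₂F₁ a b 1 y) 0 y := fun y hy ↦ by
    have hP := hasDerivAt_mul_ordinaryHypergeometric_two a b
      (norm_lt_one_of_mem_Ico (Ioo_subset_Ico_self hy))
    have hP' := (hasDerivAt_mul_ordinaryHypergeometric_two a b
      (norm_lt_one_of_mem_Ico (Ioo_subset_Ico_self (Ioo.one_sub_mem hy)))).comp_const_sub 1 y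
    refine ((hP.mul (hasDerivAt_ordinaryHypergeometric_one_sub hab hy)).add
      (hP'.mul (hasDerivAt_ordinaryHypergeometric_of_add_eq_one hab hy))).congr_deriv ?_
    have hy0 : y ≠ 0 := hy.1.ne'
    have hy1 : 1 - y ≠ 0 := (sub_pos.2 hy.2).ne'
    field_simp
    ring
  have hconst := isOpen_Ioo.is_const_of_deriv_eq_zero isPreconnected_Ioo
    (fun y hy ↦ (hderiv y hy).differentiableAt.differentiableWithinAt)
    (fun y hy ↦ (hderiv y hy).deriv) hx (show (1 / 2 : ℝ) ∈ Ioo 0 1 by norm_num)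
  rw [hconst, sub_half]
  ring

lemma hasDerivAt_ordinaryHypergeometric_one_sub_div (ha : 0 < a) (hb : 0 < b) (hab : a + b = 1)
    (hx : x ∈ Ioo 0 1) :
    HasDerivAt (fun y ↦ ₂F₁ a b 1 (1 - y) / ₂F₁ a b 1 y)
      (-(a * b * (₂F₁ a b 2 (1 / 2 : ℝ) * ₂F₁ a b 1 (1 / 2 : ℝ)) /
        (x * (1 - x) * ₂F₁ a b 1 x ^ 2))) x := by
  have hF : ₂F₁ a b 1 x ≠ 0 :=
    (ordinaryHypergeometric_pos ha hb one_pos (Ioo_subset_Ico_self hx)).ne'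
  refine ((hasDerivAt_ordinaryHypergeometric_one_sub hab hx).div
    (hasDerivAt_ordinaryHypergeometric_of_add_eq_one hab hx) hF).congr_deriv ?_
  rw [← ordinaryHypergeometric_legendre_relation hab hx]
  have hx0 : x ≠ 0 := hx.1.ne'
  have hx1 : 1 - x ≠ 0 := (sub_pos.2 hx.2).ne'
  field_simp
  ring

lemma tendsto_ordinaryHypergeometric_one_sub_div (ha : 0 < a) (hb : 0 < b) (hab : a + b = 1) :
    Tendsto (fun x : ℝ ↦ ₂F₁ a b 1 (1 - x) / ₂F₁ a b 1 x) (𝓝[<] 1) (𝓝 0) := by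
  have hcont : ContinuousAt (₂F₁ a b 1) (0 : ℝ) :=
    (differentiableAt_ordinaryHypergeometric a b 1 (by simp)).continuousAt
  exact (hcont.tendsto.comp ((tendsto_sub_nhdsLT 1).mono_right nhdsWithin_le_nhds)).div_atTop
    (tendsto_ordinaryHypergeometric_nhdsLT_one ha hb hab)

end Legendre

section Calculus

lemma lt_of_strictAntiOn_of_tendsto_nhdsLT {α β : Type*} [LinearOrder α] [DenselyOrdered α]
    [TopologicalSpace α] [OrderTopology α] [Preorder β] [TopologicalSpace β]
    [OrderClosedTopology β] {f : α → β} {a b x : α} {l : β} (hf : StrictAntiOn f (Ioo a b))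
    (hl : Tendsto f (𝓝[<] b) (𝓝 l)) (hx : x ∈ Ioo a b) : l < f x := by
  obtain ⟨y, hxy, hyb⟩ := exists_between hx.2
  have hy : y ∈ Ioo a b := ⟨hx.1.trans hxy, hyb⟩
  have : (𝓝[<] b).NeBot := nhdsLT_neBot_of_exists_lt ⟨a, hx.1.trans hx.2⟩
  have hly : l ≤ f y := by
    refine le_of_tendsto hl ?_
    filter_upwards [Ioo_mem_nhdsLT hyb] with z hz
    exact (hf hy ⟨hy.1.trans hz.1, hz.2⟩ hz.1).le
  exact hly.trans_lt (hf hx hy hxy)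

-- `r * f' r` is the derivative of `f` in the variable `log r`, so `hf'` says that `f ∘ exp` is
-- strictly concave on `(-∞, 0)`.
lemma strictAntiOn_add_sub_comp_mul {f f' : ℝ → ℝ} {t : ℝ}
    (hf : ∀ r ∈ Ioo (0 : ℝ) 1, HasDerivAt f (f' r) r)
    (hf' : StrictAntiOn (fun r ↦ r * f' r) (Ioo 0 1)) (ht : t ∈ Ioo 0 1) :
    StrictAntiOn (fun r ↦ f r + f t - f (r * t)) (Ioo 0 1) := by
  have hderiv : ∀ r ∈ Ioo (0 : ℝ) 1,
      HasDerivAt (fun r ↦ f r + f t - f (r * t)) (f' r - f' (r * t) * t) r := fun r hr ↦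
    ((hf r hr).add_const (f t)).sub
      ((hf _ (mul_mem_Ioo_zero_one hr ht)).comp r (hasDerivAt_mul_const t))
  refine strictAntiOn_of_deriv_neg (convex_Ioo 0 1)
    (fun r hr ↦ (hderiv r hr).continuousAt.continuousWithinAt) fun r hr ↦ ?_
  rw [interior_Ioo] at hr
  rw [(hderiv r hr).deriv]
  have hanti : r * f' r < r * t * f' (r * t) :=
    hf' (mul_mem_Ioo_zero_one hr ht) hr (mul_lt_of_lt_one_right hr.1 ht.2)
  refine neg_of_mul_neg_right ?_ hr.1.le
  linarith

end Calculus

section Grotzsch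

variable {a : ℝ}

lemma Ka_eq_ordinaryHypergeometric (a r : ℝ) : Ka a r = π / 2 * ₂F₁ a (1 - a) 1 (r ^ 2) := by
  rw [Ka, ordinaryHypergeometric_eq_tsum]
  congr 2 with n
  rw [ascPochhammer_eval_one, smul_eq_mul, poch, poch, pow_mul]
  ring

lemma Ka_pos (ha : a ∈ Ioo 0 1) {r : ℝ} (hr : r ∈ Ioo 0 1) : 0 < Ka a r := by
  rw [Ka_eq_ordinaryHypergeometric]
  exact mul_pos pi_div_two_pos (ordinaryHypergeometric_pos ha.1 (sub_pos.2 ha.2) one_pos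
    (Ioo_subset_Ico_self (sq_mem_Ioo_zero_one hr)))

lemma strictAntiOn_one_sub_sq_mul_Ka_sq (ha : a ∈ Ioo 0 1) :
    StrictAntiOn (fun r ↦ (1 - r ^ 2) * Ka a r ^ 2) (Ioo 0 1) := by
  have hlt : 2 * (a * (1 - a)) < 1 := by nlinarith [sq_nonneg (a - 1 / 2)]
  have hF := strictAntiOn_one_sub_mul_ordinaryHypergeometric_sq ha.1 (sub_pos.2 ha.2)
    (add_sub_cancel a 1) hlt
  intro r hr s hs hrs
  have hrs2 := hF (Ioo_subset_Ico_self (sq_mem_Ioo_zero_one hr))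
    (Ioo_subset_Ico_self (sq_mem_Ioo_zero_one hs)) (pow_lt_pow_left₀ hrs hr.1.le two_ne_zero)
  simp only [Ka_eq_ordinaryHypergeometric, mul_pow, mul_left_comm _ ((π / 2) ^ 2)]
  exact mul_lt_mul_of_pos_left hrs2 (pow_pos pi_div_two_pos 2)

lemma muG_eq_ordinaryHypergeometric (a : ℝ) {r : ℝ} (hr : r ∈ Ioo 0 1) :
    muG a r = π / (2 * sin (π * a)) *
      (₂F₁ a (1 - a) 1 (1 - r ^ 2) / ₂F₁ a (1 - a) 1 (r ^ 2)) := by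
  rw [muG, Ka_eq_ordinaryHypergeometric, Ka_eq_ordinaryHypergeometric,
    sq_sqrt (Ioo.one_sub_mem (sq_mem_Ioo_zero_one hr)).1.le,
    mul_div_mul_left _ _ pi_div_two_pos.ne']

lemma exists_hasDerivAt_muG (ha : a ∈ Ioo 0 1) :
    ∃ C > 0, ∀ r ∈ Ioo (0 : ℝ) 1,
      HasDerivAt (muG a) (-(C / (r * ((1 - r ^ 2) * Ka a r ^ 2)))) r := by
  have hb : 0 < 1 - a := sub_pos.2 ha.2
  have hsin : 0 < sin (π * a) :=
    sin_pos_of_pos_of_lt_pi (mul_pos pi_pos ha.1) (mul_lt_of_lt_one_right pi_pos ha.2)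
  have hhalf : (1 / 2 : ℝ) ∈ Ico 0 1 := by norm_num
  have hF := ordinaryHypergeometric_pos ha.1 hb one_pos hhalf
  have hG := ordinaryHypergeometric_pos ha.1 hb two_pos hhalf
  set W := ₂F₁ a (1 - a) 2 (1 / 2 : ℝ) * ₂F₁ a (1 - a) 1 (1 / 2 : ℝ) with hW
  have hW0 : 0 < W := mul_pos hG hF
  have ha0 := ha.1
  refine ⟨π / (2 * sin (π * a)) * (2 * (a * (1 - a) * W)) * (π / 2) ^ 2, by positivity,
    fun r hr ↦ ?_⟩
  have hquot := HasDerivAt.comp r (h := fun y : ℝ ↦ y ^ 2)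
    (hasDerivAt_ordinaryHypergeometric_one_sub_div ha.1 hb (add_sub_cancel a 1)
      (sq_mem_Ioo_zero_one hr)) (hasDerivAt_pow 2 r)
  refine ((hquot.const_mul (π / (2 * sin (π * a)))).congr_of_eventuallyEq ?_).congr_deriv ?_
  · filter_upwards [isOpen_Ioo.mem_nhds hr] with s hs using muG_eq_ordinaryHypergeometric a hs
  · have hr0 : r ≠ 0 := hr.1.ne'
    have hr1 : 1 - r ^ 2 ≠ 0 := (Ioo.one_sub_mem (sq_mem_Ioo_zero_one hr)).1.ne'
    have hFr := ordinaryHypergeometric_pos ha.1 hb one_pos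
      (Ioo_subset_Ico_self (sq_mem_Ioo_zero_one hr))
    rw [← hW, Ka_eq_ordinaryHypergeometric]
    field_simp
    norm_num

lemma tendsto_muG_nhdsLT_one (ha : a ∈ Ioo 0 1) : Tendsto (muG a) (𝓝[<] 1) (𝓝 0) := by
  have hIoo : Ioo (0 : ℝ) 1 ∈ 𝓝[<] 1 := Ioo_mem_nhdsLT one_pos
  have hsq : Tendsto (fun r : ℝ ↦ r ^ 2) (𝓝[<] 1) (𝓝[<] 1) := by
    refine tendsto_nhdsWithin_iff.2 ⟨?_, ?_⟩
    · exact ((continuous_pow 2).tendsto' 1 1 (one_pow 2)).mono_left nhdsWithin_le_nhds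
    · filter_upwards [hIoo] with r hr using (sq_mem_Ioo_zero_one hr).2
  have hquot := ((tendsto_ordinaryHypergeometric_one_sub_div ha.1 (sub_pos.2 ha.2)
    (add_sub_cancel a 1)).comp hsq).const_mul (π / (2 * sin (π * a)))
  rw [mul_zero] at hquot
  refine hquot.congr' ?_
  filter_upwards [hIoo] with r hr using (muG_eq_ordinaryHypergeometric a hr).symm

lemma strictAntiOn_muG_add_sub_muG_mul (ha : a ∈ Ioo 0 1) {t : ℝ} (ht : t ∈ Ioo 0 1) :
    StrictAntiOn (fun r ↦ muG a r + muG a t - muG a (r * t)) (Ioo 0 1) := by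
  obtain ⟨C, hC, hderiv⟩ := exists_hasDerivAt_muG ha
  refine strictAntiOn_add_sub_comp_mul hderiv (fun r hr s hs hrs ↦ ?_) ht
  have hlt := strictAntiOn_one_sub_sq_mul_Ka_sq ha hr hs hrs
  have hKs : 0 < (1 - s ^ 2) * Ka a s ^ 2 :=
    mul_pos (Ioo.one_sub_mem (sq_mem_Ioo_zero_one hs)).1 (pow_pos (Ka_pos ha hs) 2)
  have hmul {x : ℝ} (hx : x ∈ Ioo 0 1) (H : ℝ) : x * -(C / (x * H)) = -(C / H) := by
    rw [mul_neg, ← mul_div_assoc, mul_div_mul_left _ _ hx.1.ne']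
  simp only [hmul hr, hmul hs]
  exact neg_lt_neg (div_lt_div_of_pos_left hC hKs hlt)

lemma tendsto_muG_add_sub_muG_mul (ha : a ∈ Ioo 0 1) {t : ℝ} (ht : t ∈ Ioo 0 1) :
    Tendsto (fun r ↦ muG a r + muG a t - muG a (r * t)) (𝓝[<] 1) (𝓝 0) := by
  obtain ⟨C, -, hderiv⟩ := exists_hasDerivAt_muG ha
  have hmul : Tendsto (fun r ↦ r * t) (𝓝[<] 1) (𝓝 t) :=
    ((continuous_mul_const t).tendsto' 1 t (one_mul t)).mono_left nhdsWithin_le_nhds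
  simpa using ((tendsto_muG_nhdsLT_one ha).add_const (muG a t)).sub
    ((hderiv t ht).continuousAt.tendsto.comp hmul)

end Grotzsch

theorem mua_superadditive_general (a : ℝ) (ha : a ∈ Ioo (0 : ℝ) 1) :
    StrictAntiOn (fun r : ℝ ↦ (1 - r ^ 2) * (Ka a r) ^ 2) (Ioo 0 1) ∧
    (∀ t ∈ Ioo (0 : ℝ) 1,
      StrictAntiOn (fun r : ℝ ↦ muG a r + muG a t - muG a (r * t)) (Ioo 0 1) ∧
      Tendsto (fun r : ℝ ↦ muG a r + muG a t - muG a (r * t)) (𝓝[<] 1) (𝓝 0)) ∧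
    ∀ r ∈ Ioo (0 : ℝ) 1, ∀ t ∈ Ioo (0 : ℝ) 1, muG a (r * t) < muG a r + muG a t := by
  refine ⟨strictAntiOn_one_sub_sq_mul_Ka_sq ha, fun t ht ↦
    ⟨strictAntiOn_muG_add_sub_muG_mul ha ht, tendsto_muG_add_sub_muG_mul ha ht⟩,
    fun r hr t ht ↦ sub_pos.1 ?_⟩
  exact lt_of_strictAntiOn_of_tendsto_nhdsLT
    (f := fun r ↦ muG a r + muG a t - muG a (r * t)) (strictAntiOn_muG_add_sub_muG_mul ha ht)
    (tendsto_muG_add_sub_muG_mul ha ht) hr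

theorem mua_superadditive (a : ℝ) (ha : a ∈ Set.Ioc (0:ℝ) (1/2)) :
    StrictAntiOn (fun r : ℝ => (1 - r^2) * (Ka a r)^2) (Set.Ioo 0 1) ∧
    (∀ t ∈ Set.Ioo (0:ℝ) 1,
      StrictAntiOn (fun r : ℝ => muG a r + muG a t - muG a (r * t)) (Set.Ioo 0 1) ∧
      Filter.Tendsto (fun r : ℝ => muG a r + muG a t - muG a (r * t))
        (nhdsWithin 1 (Set.Iio 1)) (nhds 0)) ∧
    ∀ r ∈ Set.Ioo (0:ℝ) 1, ∀ t ∈ Set.Ioo (0:ℝ) 1,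
      muG a (r * t) < muG a r + muG a t :=
  mua_superadditive_general a ⟨ha.1, ha.2.trans_lt one_half_lt_one⟩
end
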